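/- arXiv:2508.10565 — 5 statements merged into one kernel-verified Lean document; each statement's English description precedes it below -/
import Mathlib

section
/- Let (g, s, V, Z, P) be a generalized kinematical Lie algebra over 𝕂. Then [P, P] ⊆ Z ⊕ s, [Z ⊕ s, P] ⊆ P and [Z ⊕ s, Z ⊕ s] ⊆ Z ⊕ s; consequently the linear endomorphism σ of g that equals the identity on Z ⊕ s and minus the identity on P is an involutive automorphism of the Lie algebra g. -/
/-!
Everything follows from the vanishing of equivariant bilinear maps `V × V → V`, applied three times.

* The `P`-component of the bracket of two copies of `V` inside `P` is equivariant, because the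
  projection onto `P` along `Z ⊕ s` is; hence `[P, P] ⊆ Z ⊕ s` (`lie_component_eq_zero`).
* An equivariant map `f : V → s` yields the equivariant bilinear map `(x, y) ↦ f x • y`, which
  vanishes, so `f = 0` by faithfulness (`toSubalgebra_eq_zero`).
* A linear form `f` on `V` that kills `s • V` yields the equivariant bilinear map
  `(x, y) ↦ f x • y`, so `f = 0` since `V ≠ 0` (`toTrivial_eq_zero`).

For `z ∈ Z`, the operator `ad z` commutes with the action of `s`, so the last two points applied to
the `s`- and `Z`-components of `ad z` on each copy of `V` give `[Z, P] ⊆ P`. Finally `[Z, Z] = 0`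
because `Z` is a line. The three inclusions say that `Z ⊕ s` and `P` are the even and odd parts of
a `ℤ/2`-grading of `g`, and `σ` is the corresponding parity automorphism (`exists_parity`).
-/

section Vanishing

variable {𝕂 g : Type*} [Field 𝕂] [LieRing g] [LieAlgebra 𝕂 g] {s : LieSubalgebra 𝕂 g}
  {V : Type*} [AddCommGroup V] [Module 𝕂 V] [LieRingModule s V]

/-- For equivariant maps `i`, `j` from `V` to `g` and `q` from `g` back to `V`, the `q`-component of
the bracket of the images of `i` and `j` vanishes. -/
lemma lie_component_eq_zero
    (hVbil : ∀ b : V →ₗ[𝕂] V →ₗ[𝕂] V,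
      (∀ (T : s) (x y : V), b ⁅T, x⁆ y + b x ⁅T, y⁆ = ⁅T, b x y⁆) → b = 0)
    (i j : V →ₗ[𝕂] g) (q : g →ₗ[𝕂] V)
    (hi : ∀ (T : s) x, i ⁅T, x⁆ = ⁅(T : g), i x⁆) (hj : ∀ (T : s) x, j ⁅T, x⁆ = ⁅(T : g), j x⁆)
    (hq : ∀ (T : s) x, q ⁅(T : g), x⁆ = ⁅T, q x⁆) (x y : V) : q ⁅i x, j y⁆ = 0 := by
  let b : V →ₗ[𝕂] V →ₗ[𝕂] V := LinearMap.mk₂ 𝕂 (fun x y => q ⁅i x, j y⁆)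
    (by simp) (by simp) (by simp) (by simp)
  have hb : b = 0 := hVbil b fun T x y => by
    simp only [b, LinearMap.mk₂_apply, hi, hj, ← hq, ← map_add]
    rw [leibniz_lie (T : g)]
  exact congrArg (fun c : V →ₗ[𝕂] V →ₗ[𝕂] V => c x y) hb

/-- An equivariant map from `V` to the adjoint module of `s` vanishes. -/
lemma toSubalgebra_eq_zero [LieModule 𝕂 s V]
    (hVfaith : ∀ T : s, (∀ v : V, ⁅T, v⁆ = 0) → T = 0)
    (hVbil : ∀ b : V →ₗ[𝕂] V →ₗ[𝕂] V,
      (∀ (T : s) (x y : V), b ⁅T, x⁆ y + b x ⁅T, y⁆ = ⁅T, b x y⁆) → b = 0)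
    (f : V →ₗ[𝕂] s) (hf : ∀ (T : s) x, f ⁅T, x⁆ = ⁅T, f x⁆) (x : V) : f x = 0 := by
  let b : V →ₗ[𝕂] V →ₗ[𝕂] V := LinearMap.mk₂ 𝕂 (fun x y => ⁅f x, y⁆)
    (by simp) (by simp) (by simp) (by simp)
  have hb : b = 0 := hVbil b fun T x y => by
    simp only [b, LinearMap.mk₂_apply, hf]
    rw [leibniz_lie T (f x) y]
  exact hVfaith _ fun y => congrArg (fun c : V →ₗ[𝕂] V →ₗ[𝕂] V => c x y) hb

/-- An equivariant map from `V` to a trivial module vanishes. -/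
lemma toTrivial_eq_zero [LieModule 𝕂 s V] [Nontrivial V] {W : Type*} [AddCommGroup W] [Module 𝕂 W]
    (hVbil : ∀ b : V →ₗ[𝕂] V →ₗ[𝕂] V,
      (∀ (T : s) (x y : V), b ⁅T, x⁆ y + b x ⁅T, y⁆ = ⁅T, b x y⁆) → b = 0)
    (f : V →ₗ[𝕂] W) (hf : ∀ (T : s) x, f ⁅T, x⁆ = 0) (x : V) : f x = 0 := by
  rw [← Module.forall_dual_apply_eq_zero_iff 𝕂]
  intro l
  let b : V →ₗ[𝕂] V →ₗ[𝕂] V := LinearMap.mk₂ 𝕂 (fun x y => l (f x) • y)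
    (by simp [add_smul]) (by simp [mul_smul]) (by simp) (fun c x y => smul_comm _ _ _)
  have hb : b = 0 := hVbil b fun T x y => by
    simp [b, hf]
  obtain ⟨y, hy⟩ := exists_ne (0 : V)
  have h : l (f x) • y = 0 := congrArg (fun c : V →ₗ[𝕂] V →ₗ[𝕂] V => c x y) hb
  exact (smul_eq_zero.mp h).resolve_right hy

end Vanishing

/-- The parity automorphism of a Lie algebra that is `ℤ/2`-graded with even part `A` and odd part
`B`. -/
lemma exists_parity {𝕂 g : Type*} [Field 𝕂] [LieRing g] [LieAlgebra 𝕂 g]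
    {A B : Submodule 𝕂 g} (h : IsCompl A B)
    (hBB : ∀ x ∈ B, ∀ y ∈ B, ⁅x, y⁆ ∈ A) (hAB : ∀ x ∈ A, ∀ y ∈ B, ⁅x, y⁆ ∈ B)
    (hAA : ∀ x ∈ A, ∀ y ∈ A, ⁅x, y⁆ ∈ A) :
    ∃ σ : g ≃ₗ⁅𝕂⁆ g, (∀ x ∈ A, σ x = x) ∧ (∀ x ∈ B, σ x = -x) ∧ (∀ x : g, σ (σ x) = x) := by
  let τ : g →ₗ[𝕂] g := LinearMap.ofIsCompl h A.subtype (-B.subtype)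
  have hA : ∀ x ∈ A, τ x = x := fun x hx => LinearMap.ofIsCompl_apply_left h ⟨x, hx⟩
  have hB : ∀ x ∈ B, τ x = -x := fun x hx => LinearMap.ofIsCompl_apply_right h ⟨x, hx⟩
  have hdec : ∀ x : g, ∃ a ∈ A, ∃ b ∈ B, a + b = x := fun x =>
    Submodule.mem_sup.mp (h.sup_eq_top ▸ Submodule.mem_top)
  have hττ : ∀ x, τ (τ x) = x := by
    intro x
    obtain ⟨a, ha, b, hb, rfl⟩ := hdec x
    simp [hA a ha, hB b hb]
  have hlie : ∀ x y, τ ⁅x, y⁆ = ⁅τ x, τ y⁆ := by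
    intro x y
    obtain ⟨a, ha, b, hb, rfl⟩ := hdec x
    obtain ⟨c, hc, d, hd, rfl⟩ := hdec y
    have hbc : τ ⁅b, c⁆ = -⁅b, c⁆ := by
      rw [← lie_skew, map_neg, hB _ (hAB c hc b hb)]
    simp only [lie_add, add_lie, map_add, hA a ha, hB b hb, hA c hc, hB d hd,
      hA _ (hAA a ha c hc), hB _ (hAB a ha d hd), hA _ (hBB b hb d hd), hbc, lie_neg, neg_lie]
    abel
  let τ' : g →ₗ⁅𝕂⁆ g := ⟨τ, fun {x y} => hlie x y⟩
  exact ⟨⟨τ', τ, hττ, hττ⟩, hA, hB, hττ⟩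

theorem stmt_0 {𝕂 : Type*} [RCLike 𝕂]
    {g : Type*} [LieRing g] [LieAlgebra 𝕂 g] [FiniteDimensional 𝕂 g]
    (s : LieSubalgebra 𝕂 g)
    (V : Type*) [AddCommGroup V] [Module 𝕂 V] [FiniteDimensional 𝕂 V]
    [LieRingModule s V] [LieModule 𝕂 s V]
    -- V is a faithful s-module
    (hVfaith : ∀ T : s, (∀ v : V, ⁅T, v⁆ = 0) → T = 0)
    -- V is a simple s-module
    (hVnontriv : Nontrivial V)
    (hVsimple : ∀ W : LieSubmodule 𝕂 s V, W = ⊥ ∨ W = ⊤)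
    -- every s-equivariant bilinear map V × V → V vanishes
    (hVbil : ∀ b : V →ₗ[𝕂] V →ₗ[𝕂] V,
      (∀ (T : s) (x y : V), b ⁅T, x⁆ y + b x ⁅T, y⁆ = ⁅T, b x y⁆) → b = 0)
    (Z P : Submodule 𝕂 g)
    -- vector space decomposition g = Z ⊕ s ⊕ P
    (hspan : Z ⊔ s.toSubmodule ⊔ P = ⊤)
    (hindep : ∀ z ∈ Z, ∀ t ∈ s.toSubmodule, ∀ p ∈ P,
      z + t + p = 0 → z = 0 ∧ t = 0 ∧ p = 0)
    -- Z is a line centralizing s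
    (hZdim : Module.finrank 𝕂 Z = 1)
    (hZs : ∀ z ∈ Z, ∀ T ∈ s, ⁅z, T⁆ = (0 : g))
    -- P is ad(s)-stable
    (hPstab : ∀ (T : s) (p : g), p ∈ P → ⁅(T : g), p⁆ ∈ P)
    -- P is isomorphic as an s-module to V ⊕ V
    (e : P ≃ₗ[𝕂] V × V)
    (he : ∀ (T : s) (p : g) (hp : p ∈ P),
      e ⟨⁅(T : g), p⁆, hPstab T p hp⟩ = (⁅T, (e ⟨p, hp⟩).1⁆, ⁅T, (e ⟨p, hp⟩).2⁆)) :
    (∀ x ∈ P, ∀ y ∈ P, ⁅x, y⁆ ∈ Z ⊔ s.toSubmodule) ∧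
    (∀ H ∈ Z ⊔ s.toSubmodule, ∀ p ∈ P, ⁅H, p⁆ ∈ P) ∧
    (∀ a ∈ Z ⊔ s.toSubmodule, ∀ b ∈ Z ⊔ s.toSubmodule, ⁅a, b⁆ ∈ Z ⊔ s.toSubmodule) ∧
    ∃ σ : g ≃ₗ⁅𝕂⁆ g,
      (∀ x ∈ Z ⊔ s.toSubmodule, σ x = x) ∧
      (∀ x ∈ P, σ x = -x) ∧
      (∀ x : g, σ (σ x) = x) := by
  -- the decomposition as a linear equivalence, whose inverse gives all three projections
  let Φ : (Z × s × P) →ₗ[𝕂] g :=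
    Z.subtype.coprod (s.toSubmodule.subtype.coprod P.subtype)
  have hΦ : ∀ u : Z × s × P, Φ u = (u.1 : g) + ((u.2.1 : g) + (u.2.2 : g)) := fun u => rfl
  have hbij : Function.Bijective Φ := by
    constructor
    · rw [← LinearMap.ker_eq_bot, LinearMap.ker_eq_bot']
      rintro ⟨z, t, p⟩ hu
      rw [hΦ, ← add_assoc] at hu
      obtain ⟨h1, h2, h3⟩ := hindep z z.2 t t.2 p p.2 hu
      exact Prod.ext (Subtype.ext h1) (Prod.ext (Subtype.ext h2) (Subtype.ext h3))
    · intro x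
      have hx : x ∈ Z ⊔ s.toSubmodule ⊔ P := hspan ▸ Submodule.mem_top
      obtain ⟨a, ha, p, hp, rfl⟩ := Submodule.mem_sup.mp hx
      obtain ⟨z, hz, t, ht, rfl⟩ := Submodule.mem_sup.mp ha
      exact ⟨(⟨z, hz⟩, ⟨t, ht⟩, ⟨p, hp⟩), by rw [hΦ, add_assoc]⟩
  let D : g ≃ₗ[𝕂] (Z × s × P) := (LinearEquiv.ofBijective Φ hbij).symm
  have hD : ∀ x : g, ((D x).1 : g) + (((D x).2.1 : g) + ((D x).2.2 : g)) = x := fun x =>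
    (LinearEquiv.ofBijective Φ hbij).apply_symm_apply x
  have hDu : ∀ u : Z × s × P, D ((u.1 : g) + ((u.2.1 : g) + (u.2.2 : g))) = u := fun u =>
    (LinearEquiv.ofBijective Φ hbij).symm_apply_apply u
  have hsZ : ∀ T : s, ∀ z ∈ Z, ⁅(T : g), z⁆ = 0 := fun T z hz => by
    rw [← lie_skew, hZs z hz T T.2, neg_zero]
  have hDT : ∀ (T : s) (x : g),
      D ⁅(T : g), x⁆ = (0, ⁅T, (D x).2.1⁆, ⟨⁅(T : g), (D x).2.2⁆, hPstab T _ (D x).2.2.2⟩) := by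
    intro T x
    rw [← hDu (0, ⁅T, (D x).2.1⁆, ⟨⁅(T : g), (D x).2.2⁆, hPstab T _ (D x).2.2.2⟩)]
    congr 1
    conv_lhs => rw [← hD x]
    simp [hsZ T _ (D x).1.2]
  have hmemP : ∀ x : g, (D x).1 = 0 → (D x).2.1 = 0 → x ∈ P := by
    intro x h1 h2
    rw [← hD x, h1, h2]
    simp
  have hmemA : ∀ x : g, (D x).2.2 = 0 → x ∈ Z ⊔ s.toSubmodule := by
    intro x h
    rw [← hD x, h]
    simpa using Submodule.add_mem_sup (D x).1.2 (D x).2.1.2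
  -- the two copies of `V` inside `P`, and the two `V`-components of the projection to `P`
  let i₁ : V →ₗ[𝕂] g := P.subtype ∘ₗ e.symm.toLinearMap ∘ₗ LinearMap.inl 𝕂 V V
  let i₂ : V →ₗ[𝕂] g := P.subtype ∘ₗ e.symm.toLinearMap ∘ₗ LinearMap.inr 𝕂 V V
  let π : g →ₗ[𝕂] P := LinearMap.snd 𝕂 s P ∘ₗ LinearMap.snd 𝕂 Z (s × P) ∘ₗ D.toLinearMap
  let q₁ : g →ₗ[𝕂] V := LinearMap.fst 𝕂 V V ∘ₗ e.toLinearMap ∘ₗ π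
  let q₂ : g →ₗ[𝕂] V := LinearMap.snd 𝕂 V V ∘ₗ e.toLinearMap ∘ₗ π
  have hesymm : ∀ (T : s) (u : V × V),
      ((e.symm (⁅T, u.1⁆, ⁅T, u.2⁆) : P) : g) = ⁅(T : g), ((e.symm u : P) : g)⁆ := by
    intro T u
    have h := he T (e.symm u) (e.symm u).2
    simp only [Subtype.coe_eta, LinearEquiv.apply_symm_apply] at h
    rw [← h, LinearEquiv.symm_apply_apply]
  have hi₁ : ∀ (T : s) x, i₁ ⁅T, x⁆ = ⁅(T : g), i₁ x⁆ := fun T x => by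
    simpa [i₁] using hesymm T (x, 0)
  have hi₂ : ∀ (T : s) x, i₂ ⁅T, x⁆ = ⁅(T : g), i₂ x⁆ := fun T x => by
    simpa [i₂] using hesymm T (0, x)
  have hq : ∀ (T : s) x, e (D ⁅(T : g), x⁆).2.2 =
      (⁅T, (e (D x).2.2).1⁆, ⁅T, (e (D x).2.2).2⁆) := fun T x => by
    rw [hDT]
    exact he T _ (D x).2.2.2
  have hq₁ : ∀ (T : s) x, q₁ ⁅(T : g), x⁆ = ⁅T, q₁ x⁆ := fun T x => congrArg Prod.fst (hq T x)
  have hq₂ : ∀ (T : s) x, q₂ ⁅(T : g), x⁆ = ⁅T, q₂ x⁆ := fun T x => congrArg Prod.snd (hq T x)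
  have hPi : ∀ x ∈ P, ∃ v w : V, x = i₁ v + i₂ w := by
    intro x hx
    refine ⟨(e ⟨x, hx⟩).1, (e ⟨x, hx⟩).2, ?_⟩
    have h : e.symm ((e ⟨x, hx⟩).1, 0) + e.symm (0, (e ⟨x, hx⟩).2) = ⟨x, hx⟩ := by
      rw [← map_add]
      simp
    exact (congrArg Subtype.val h).symm
  have hBB : ∀ x ∈ P, ∀ y ∈ P, ⁅x, y⁆ ∈ Z ⊔ s.toSubmodule := by
    intro x hx y hy
    obtain ⟨v, w, rfl⟩ := hPi x hx
    obtain ⟨v', w', rfl⟩ := hPi y hy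
    apply hmemA
    apply e.injective
    rw [map_zero]
    have key := fun i j q hi hj hq => lie_component_eq_zero (s := s) hVbil i j q hi hj hq
    refine Prod.ext (?_ : q₁ _ = 0) (?_ : q₂ _ = 0)
    · simp [key i₁ i₁ q₁ hi₁ hi₁ hq₁, key i₁ i₂ q₁ hi₁ hi₂ hq₁, key i₂ i₁ q₁ hi₂ hi₁ hq₁,
        key i₂ i₂ q₁ hi₂ hi₂ hq₁]
    · simp [key i₁ i₁ q₂ hi₁ hi₁ hq₂, key i₁ i₂ q₂ hi₁ hi₂ hq₂, key i₂ i₁ q₂ hi₂ hi₁ hq₂,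
        key i₂ i₂ q₂ hi₂ hi₂ hq₂]
  have hZi : ∀ z ∈ Z, ∀ i : V →ₗ[𝕂] g, (∀ (T : s) x, i ⁅T, x⁆ = ⁅(T : g), i x⁆) →
      ∀ v, ⁅z, i v⁆ ∈ P := by
    intro z hz i hi v
    -- `f` is `ad z` on the chosen copy of `V`, decomposed; `ad z` commutes with `ad T` for `T ∈ s`
    let f : V →ₗ[𝕂] (Z × s × P) := D.toLinearMap ∘ₗ LieAlgebra.ad 𝕂 g z ∘ₗ i
    have hf : ∀ (T : s) x, f ⁅T, x⁆ = D ⁅(T : g), ⁅z, i x⁆⁆ := fun T x => by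
      change D ⁅z, i ⁅T, x⁆⁆ = _
      rw [hi, leibniz_lie, hZs z hz T T.2, zero_lie, zero_add]
    refine hmemP _ ?_ ?_
    · exact toTrivial_eq_zero hVbil (LinearMap.fst 𝕂 Z (s × P) ∘ₗ f)
        (fun T x => by simp [hf, hDT]) v
    · refine toSubalgebra_eq_zero hVfaith hVbil
        (LinearMap.fst 𝕂 s P ∘ₗ LinearMap.snd 𝕂 Z (s × P) ∘ₗ f) (fun T x => ?_) v
      change (f ⁅T, x⁆).2.1 = ⁅T, (D ⁅z, i x⁆).2.1⁆
      rw [hf, hDT]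
  have hAB : ∀ H ∈ Z ⊔ s.toSubmodule, ∀ p ∈ P, ⁅H, p⁆ ∈ P := by
    intro H hH p hp
    obtain ⟨z, hz, t, ht, rfl⟩ := Submodule.mem_sup.mp hH
    rw [add_lie]
    refine P.add_mem ?_ (hPstab ⟨t, ht⟩ p hp)
    obtain ⟨v, w, rfl⟩ := hPi p hp
    rw [lie_add]
    exact P.add_mem (hZi z hz i₁ hi₁ v) (hZi z hz i₂ hi₂ w)
  have hAA : ∀ a ∈ Z ⊔ s.toSubmodule, ∀ b ∈ Z ⊔ s.toSubmodule, ⁅a, b⁆ ∈ Z ⊔ s.toSubmodule := by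
    intro a ha b hb
    obtain ⟨z, hz, t, ht, rfl⟩ := Submodule.mem_sup.mp ha
    obtain ⟨z', hz', t', ht', rfl⟩ := Submodule.mem_sup.mp hb
    obtain ⟨z₀, -, h₀⟩ := finrank_eq_one_iff'.mp hZdim
    obtain ⟨c, hc⟩ := h₀ ⟨z, hz⟩
    obtain ⟨c', hc'⟩ := h₀ ⟨z', hz'⟩
    have hzz : ⁅z, z'⁆ = 0 := by
      rw [show z = c • (z₀ : g) from congrArg Subtype.val hc.symm,
        show z' = c' • (z₀ : g) from congrArg Subtype.val hc'.symm]
      simp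
    have : ⁅z + t, z' + t'⁆ = ⁅t, t'⁆ := by
      simp [hzz, hZs z hz t' ht', hsZ ⟨t, ht⟩ z' hz']
    rw [this]
    exact Submodule.mem_sup_right (s.lie_mem ht ht')
  refine ⟨hBB, hAB, hAA, exists_parity ⟨?_, codisjoint_iff.mpr hspan⟩ hBB hAB hAA⟩
  rw [Submodule.disjoint_def]
  intro x hx hxP
  obtain ⟨z, hz, t, ht, rfl⟩ := Submodule.mem_sup.mp hx
  exact neg_eq_zero.mp (hindep z hz t ht _ (P.neg_mem hxP) (add_neg_cancel _)).2.2
end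

section
/- Let (g, s, V, Z, P) be a generalized kinematical Lie algebra over 𝕂 = ℂ, with [P, P] ⊆ h and [h, P] ⊆ P, and assume the bilinear form ω on P is nondegenerate. Then the endomorphism A := ad(Z₀)|_P of P is either semisimple or satisfies A² = 0 (in particular, A is either semisimple or nilpotent, and when nilpotent it squares to zero). -/
/-!
By Schur's lemma over `ℂ`, an endomorphism of `P ≅ V ⊕ V` commuting with `s` is a 2 × 2 matrix of
scalars, so `A` is annihilated by a polynomial `(X - l) (X - m)` (`exists_quadratic`). If `l ≠ m`
this polynomial is squarefree and `A` is semisimple. If `l = m`, then `N = A - l` squares to zero.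
Since `Z₀` centralizes `h`, the Jacobi identity gives `ω (A x) y + ω x (A y) = 0`, that is,
`ω (N x) y + ω x (N y) = -2 l ω x y`. The left-hand side is a nilpotent operator applied to `ω`, so
`l ≠ 0` would force `ω = 0` (`form_eq_zero`), contradicting nondegeneracy. Hence `l = 0` and
`A² = 0`.
-/

/-- Schur's lemma: an equivariant endomorphism of a simple module is a scalar. -/
theorem schur_scalar {L V : Type*} [LieRing L] [LieAlgebra ℂ L]
    [AddCommGroup V] [Module ℂ V] [FiniteDimensional ℂ V] [Nontrivial V]
    [LieRingModule L V] [LieModule ℂ L V]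
    (hV : ∀ W : LieSubmodule ℂ L V, W = ⊥ ∨ W = ⊤)
    (f : V →ₗ[ℂ] V) (hf : ∀ (T : L) (v : V), f ⁅T, v⁆ = ⁅T, f v⁆) :
    ∃ c : ℂ, ∀ v, f v = c • v := by
  obtain ⟨c, hc⟩ := Module.End.exists_eigenvalue f
  obtain ⟨v, hv, hv0⟩ := hc.exists_hasEigenvector
  let W : LieSubmodule ℂ L V :=
    { Module.End.eigenspace f c with
      lie_mem := by
        intro T w hw
        have hw' : f w = c • w := Module.End.mem_eigenspace_iff.mp hw
        apply Module.End.mem_eigenspace_iff.mpr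
        rw [hf, hw', lie_smul] }
  have hvW : v ∈ W := hv
  rcases hV W with h | h
  · rw [h] at hvW
    exact absurd ((LieSubmodule.mem_bot v).mp hvW) hv0
  · refine ⟨c, fun w => ?_⟩
    have hw : w ∈ W := by rw [h]; exact LieSubmodule.mem_top w
    exact Module.End.mem_eigenspace_iff.mp hw

/-- An equivariant endomorphism of `V ⊕ V`, with `V` simple, is annihilated by a monic quadratic
polynomial: the characteristic polynomial of its 2 × 2 matrix of scalar blocks. -/
theorem exists_quadratic {L V : Type*} [LieRing L] [LieAlgebra ℂ L]
    [AddCommGroup V] [Module ℂ V] [FiniteDimensional ℂ V] [Nontrivial V]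
    [LieRingModule L V] [LieModule ℂ L V]
    (hV : ∀ W : LieSubmodule ℂ L V, W = ⊥ ∨ W = ⊤)
    (f : V × V →ₗ[ℂ] V × V)
    (hf : ∀ (T : L) (v : V × V), f (⁅T, v.1⁆, ⁅T, v.2⁆) = (⁅T, (f v).1⁆, ⁅T, (f v).2⁆)) :
    ∃ l m : ℂ, ∀ v, f (f v) = (l + m) • f v - (l * m) • v := by
  have hl : ∀ (T : L) (v : V), f (⁅T, v⁆, 0) = (⁅T, (f (v, 0)).1⁆, ⁅T, (f (v, 0)).2⁆) := by
    intro T v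
    simpa using hf T (v, 0)
  have hr : ∀ (T : L) (v : V), f (0, ⁅T, v⁆) = (⁅T, (f (0, v)).1⁆, ⁅T, (f (0, v)).2⁆) := by
    intro T v
    simpa using hf T (0, v)
  obtain ⟨a, ha⟩ := schur_scalar hV (LinearMap.fst ℂ V V ∘ₗ f ∘ₗ LinearMap.inl ℂ V V)
    (fun T v => by simp [hl])
  obtain ⟨b, hb⟩ := schur_scalar hV (LinearMap.fst ℂ V V ∘ₗ f ∘ₗ LinearMap.inr ℂ V V)
    (fun T v => by simp [hr])
  obtain ⟨c, hc⟩ := schur_scalar hV (LinearMap.snd ℂ V V ∘ₗ f ∘ₗ LinearMap.inl ℂ V V)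
    (fun T v => by simp [hl])
  obtain ⟨d, hd⟩ := schur_scalar hV (LinearMap.snd ℂ V V ∘ₗ f ∘ₗ LinearMap.inr ℂ V V)
    (fun T v => by simp [hr])
  simp only [LinearMap.comp_apply, LinearMap.fst_apply, LinearMap.snd_apply,
    LinearMap.inl_apply, LinearMap.inr_apply] at ha hb hc hd
  have key : ∀ x y : V, f (x, y) = (a • x + b • y, c • x + d • y) := by
    intro x y
    have h : ((x, y) : V × V) = (x, 0) + (0, y) := by simp
    rw [h, map_add]
    ext
    · simp [ha, hb]
    · simp [hc, hd]
  obtain ⟨δ, hδ⟩ := IsAlgClosed.exists_pow_nat_eq ((a + d) ^ 2 - 4 * (a * d - b * c))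
    (n := 2) (by norm_num)
  refine ⟨(a + d + δ) / 2, (a + d - δ) / 2, ?_⟩
  have h1 : (a + d + δ) / 2 + (a + d - δ) / 2 = a + d := by ring
  have h2 : (a + d + δ) / 2 * ((a + d - δ) / 2) = a * d - b * c := by
    linear_combination (-1 / 4) * hδ
  rintro ⟨x, y⟩
  rw [h1, h2, key, key]
  ext
  · simp only [Prod.fst_sub, Prod.smul_fst]
    module
  · simp only [Prod.snd_sub, Prod.smul_snd]
    module

/-- A bilinear form is zero if it is skew for an operator of the form `l + N` with `N² = 0`
and `l ≠ 0`. -/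
theorem form_eq_zero {M : Type*} [AddCommGroup M] [Module ℂ M] (B : M →ₗ[ℂ] M →ₗ[ℂ] ℂ)
    (N : M →ₗ[ℂ] M) (hN : ∀ x, N (N x) = 0) (l : ℂ) (hl : l ≠ 0)
    (h : ∀ x y, B (N x) y + B x (N y) = -(2 * l) * B x y) (x y : M) : B x y = 0 := by
  have hc : -(2 * l) ≠ 0 := neg_ne_zero.mpr (mul_ne_zero two_ne_zero hl)
  have h1 : ∀ x y, B (N x) (N y) = 0 := by
    intro x y
    have := h (N x) (N y)
    simp only [hN, map_zero, LinearMap.zero_apply, add_zero] at this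
    exact (mul_eq_zero.mp this.symm).resolve_left hc
  have h2 : ∀ x y, B (N x) y = 0 := by
    intro x y
    have := h (N x) y
    simp only [hN, map_zero, LinearMap.zero_apply, h1, add_zero] at this
    exact (mul_eq_zero.mp this.symm).resolve_left hc
  have h3 : ∀ x y, B x (N y) = 0 := by
    intro x y
    have := h x (N y)
    simp only [hN, map_zero, h1, add_zero] at this
    exact (mul_eq_zero.mp this.symm).resolve_left hc
  have := h x y
  rw [h2, h3, add_zero] at this
  exact (mul_eq_zero.mp this.symm).resolve_left hc

theorem stmt_1 {g : Type*} [LieRing g] [LieAlgebra ℂ g] [FiniteDimensional ℂ g]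
    (s : LieSubalgebra ℂ g)
    (V : Type*) [AddCommGroup V] [Module ℂ V] [FiniteDimensional ℂ V]
    [LieRingModule s V] [LieModule ℂ s V]
    -- V is a faithful s-module
    (hVfaith : ∀ T : s, (∀ v : V, ⁅T, v⁆ = 0) → T = 0)
    -- V is a simple s-module
    (hVnontriv : Nontrivial V)
    (hVsimple : ∀ W : LieSubmodule ℂ s V, W = ⊥ ∨ W = ⊤)
    -- every s-equivariant bilinear map V × V → V vanishes
    (hVbil : ∀ b : V →ₗ[ℂ] V →ₗ[ℂ] V,
      (∀ (T : s) (x y : V), b ⁅T, x⁆ y + b x ⁅T, y⁆ = ⁅T, b x y⁆) → b = 0)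
    (Z P : Submodule ℂ g)
    -- vector space decomposition g = Z ⊕ s ⊕ P
    (hspan : Z ⊔ s.toSubmodule ⊔ P = ⊤)
    (hindep : ∀ z ∈ Z, ∀ t ∈ s.toSubmodule, ∀ p ∈ P,
      z + t + p = 0 → z = 0 ∧ t = 0 ∧ p = 0)
    -- Z is a line centralizing s
    (hZdim : Module.finrank ℂ Z = 1)
    (hZs : ∀ z ∈ Z, ∀ T ∈ s, ⁅z, T⁆ = (0 : g))
    -- P is ad(s)-stable
    (hPstab : ∀ (T : s) (p : g), p ∈ P → ⁅(T : g), p⁆ ∈ P)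
    -- P is isomorphic as an s-module to V ⊕ V
    (e : P ≃ₗ[ℂ] V × V)
    (he : ∀ (T : s) (p : g) (hp : p ∈ P),
      e ⟨⁅(T : g), p⁆, hPstab T p hp⟩ = (⁅T, (e ⟨p, hp⟩).1⁆, ⁅T, (e ⟨p, hp⟩).2⁆))
    -- hypotheses: [P,P] ⊆ h = Z ⊕ s and [h,P] ⊆ P
    (hPP : ∀ x ∈ P, ∀ y ∈ P, ⁅x, y⁆ ∈ Z ⊔ s.toSubmodule)
    (hhP : ∀ H ∈ Z ⊔ s.toSubmodule, ∀ p ∈ P, ⁅H, p⁆ ∈ P)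
    -- a generator Z₀ of the line Z
    (Z₀ : g) (hZ₀mem : Z₀ ∈ Z) (hZ₀ne : Z₀ ≠ 0)
    -- the bilinear form ω on P, defined by [X,Y] − ω(X,Y)·Z₀ ∈ s
    (ω : ↥P →ₗ[ℂ] ↥P →ₗ[ℂ] ℂ)
    (hω : ∀ x y : ↥P, ⁅(x : g), (y : g)⁆ - ω x y • Z₀ ∈ s.toSubmodule)
    -- ω is nondegenerate
    (hωnd : ∀ x : ↥P, (∀ y : ↥P, ω x y = 0) → x = 0)
    -- A := ad(Z₀)|_P
    (A : Module.End ℂ ↥P)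
    (hA : ∀ p : ↥P, (A p : g) = ⁅Z₀, (p : g)⁆) :
    (∀ U : Submodule ℂ ↥P, (∀ x ∈ U, A x ∈ U) →
      ∃ W : Submodule ℂ ↥P, (∀ x ∈ W, A x ∈ W) ∧ IsCompl U W) ∨
    A * A = 0 := by
  -- `A` commutes with `s`, because `Z₀` centralizes `s`.
  have hcomm : ∀ (T : s) (p : P),
      A ⟨⁅(T : g), (p : g)⁆, hPstab T p p.2⟩ = ⟨⁅(T : g), (A p : g)⁆, hPstab T _ (A p).2⟩ := by
    intro T p
    apply Subtype.ext
    rw [hA]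
    change ⁅Z₀, ⁅(T : g), (p : g)⁆⁆ = ⁅(T : g), (A p : g)⁆
    rw [hA, leibniz_lie, hZs Z₀ hZ₀mem T T.2, zero_lie, zero_add]
  have hskew : ∀ x y : P, ω (A x) y + ω x (A y) = 0 := by
    intro x y
    have h0 : ⁅Z₀, ⁅(x : g), (y : g)⁆⁆ = 0 := by
      have h := hZs Z₀ hZ₀mem _ (hω x y)
      rwa [lie_sub, lie_smul, lie_self, smul_zero, sub_zero] at h
    rw [leibniz_lie, ← hA, ← hA] at h0
    have h1 := s.toSubmodule.add_mem (hω (A x) y) (hω x (A y))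
    have h2 : (ω (A x) y + ω x (A y)) • Z₀ +
        ((⁅(A x : g), (y : g)⁆ - ω (A x) y • Z₀) + (⁅(x : g), (A y : g)⁆ - ω x (A y) • Z₀)) + 0
        = 0 := by
      refine Eq.trans ?_ h0
      module
    have h3 := (hindep _ (Z.smul_mem _ hZ₀mem) _ h1 0 P.zero_mem h2).1
    exact (smul_eq_zero.mp h3).resolve_right hZ₀ne
  obtain ⟨l, m, hlm⟩ := exists_quadratic hVsimple
    (e.toLinearMap ∘ₗ A ∘ₗ e.symm.toLinearMap) (by
      intro T v
      have h1 : e.symm (⁅T, v.1⁆, ⁅T, v.2⁆)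
          = ⟨⁅(T : g), (e.symm v : g)⁆, hPstab T _ (e.symm v).2⟩ := by
        rw [LinearEquiv.symm_apply_eq, he T _ (e.symm v).2]
        simp
      simp only [LinearMap.comp_apply, LinearEquiv.coe_coe]
      rw [h1, hcomm, he T _ (A (e.symm v)).2])
  have hquad : ∀ p : P, A (A p) = (l + m) • A p - (l * m) • p := by
    intro p
    have h := hlm (e p)
    simp only [LinearMap.comp_apply, LinearEquiv.coe_coe, LinearEquiv.symm_apply_apply] at h
    apply e.injective
    rw [h, map_sub, map_smul, map_smul]
  by_cases hne : l = m
  · right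
    subst hne
    let N : P →ₗ[ℂ] P := A - l • LinearMap.id
    have hNa : ∀ x, N x = A x - l • x := fun x => rfl
    have hN : ∀ x, N (N x) = 0 := by
      intro x
      simp only [hNa, map_sub, map_smul, hquad]
      module
    by_cases hl : l = 0
    · ext1 p
      simp [hquad, hl]
    · exfalso
      have hzero := form_eq_zero ω N hN l hl (by
        intro x y
        simp only [hNa, map_sub, map_smul, LinearMap.sub_apply, LinearMap.smul_apply,
          smul_eq_mul]
        linear_combination hskew x y)
      obtain ⟨v, hv⟩ := exists_ne (0 : V)
      have h := hωnd (e.symm (v, 0)) (fun y => hzero _ y)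
      rw [LinearEquiv.symm_apply_eq, map_zero] at h
      exact hv (congrArg Prod.fst h)
  · left
    have hsq : Squarefree ((Polynomial.X - Polynomial.C l) * (Polynomial.X - Polynomial.C m)) := by
      apply Polynomial.Separable.squarefree
      exact (Polynomial.separable_X_sub_C).mul Polynomial.separable_X_sub_C
        (Polynomial.isCoprime_X_sub_C_of_isUnit_sub (sub_ne_zero.mpr hne).isUnit)
    have hss : A.IsSemisimple := by
      apply Module.End.isSemisimple_of_squarefree_aeval_eq_zero hsq
      ext1 p
      simp only [map_mul, map_sub, Polynomial.aeval_X, Polynomial.aeval_C, Module.End.mul_apply,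
        LinearMap.sub_apply, Module.algebraMap_end_apply, LinearMap.zero_apply, map_smul, hquad]
      module
    intro U hU
    obtain ⟨W, hW, hUW⟩ := Module.End.isSemisimple_iff.mp hss U hU
    exact ⟨W, hW, hUW⟩
end

section
/- Let (g, s, V, Z, P) be a generalized kinematical Lie algebra over 𝕂 = ℂ, with [P, P] ⊆ h and [h, P] ⊆ P, assume ω is nondegenerate, assume the structure is indecomposable, and assume A := ad(Z₀)|_P is semisimple and nonzero. Then A has exactly two eigenvalues, which are of the form α and −α with α ≠ 0, and the corresponding eigenspaces L and L̄ satisfy: (i) P = L ⊕ L̄, both L and L̄ are ad(h)-stable and ω-isotropic (Lagrangian), and ω restricts to a nondegenerate pairing L × L̄ → ℂ; (ii) L and L̄ are abelian Lie subalgebras of g; (iii) L and L̄ are simple s-modules. -/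
/-!
Since `Z₀` centralizes `h = Z ⊕ s ⊇ [P, P]`, the Jacobi identity gives
`[A x, y] + [x, A y] = 0` on `P`. Hence eigenspaces for `λ` and `μ` commute (and are
`ω`-orthogonal) whenever `λ + μ ≠ 0`, and nondegeneracy of `ω` forces the spectrum of `A` to be
symmetric under `μ ↦ -μ`. Semisimplicity together with `A ≠ 0` yields an eigenvalue `α ≠ 0`.

The eigenspaces of `A` are `s`-stable, and a nonzero `s`-stable subspace of `P ≅ V ⊕ V` has
dimension at least `dim V` (`finrank_le_of_stable`). As `dim P = 2 dim V`, the eigenspaces for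
`α` and `-α` both have dimension `dim V`; so they span `P`, leave no room for another
eigenvalue, and have no proper nonzero `s`-stable subspace.
-/

/-- A nonzero stable subspace `U` of a module isomorphic to `V × V`, with `V` simple, has dimension
at least `dim V`: one of the two coordinate projections is nonzero on `U`, hence maps it onto `V`.
The action on `Q` is only recorded through the operators `act T` that `e` intertwines. -/
lemma finrank_le_of_stable {S V Q : Type*} [LieRing S] [LieAlgebra ℂ S]
    [AddCommGroup V] [Module ℂ V] [LieRingModule S V] [LieModule ℂ S V]
    [AddCommGroup Q] [Module ℂ Q] [FiniteDimensional ℂ Q]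
    (hVsimple : ∀ W : LieSubmodule ℂ S V, W = ⊥ ∨ W = ⊤)
    (act : S → Q → Q) (e : Q ≃ₗ[ℂ] V × V)
    (he : ∀ T q, e (act T q) = (⁅T, (e q).1⁆, ⁅T, (e q).2⁆))
    (U : Submodule ℂ Q) (hU : ∀ T, ∀ x ∈ U, act T x ∈ U) (hne : U ≠ ⊥) :
    Module.finrank ℂ V ≤ Module.finrank ℂ U := by
  have key : ∀ f : Q →ₗ[ℂ] V, (∀ T q, f (act T q) = ⁅T, f q⁆) → (∃ x ∈ U, f x ≠ 0) →
      Module.finrank ℂ V ≤ Module.finrank ℂ U := by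
    rintro f hf ⟨x, hx, hfx⟩
    let W : LieSubmodule ℂ S V :=
      { U.map f with
        lie_mem := by
          rintro T _ ⟨q, hq, rfl⟩
          exact ⟨act T q, hU T q hq, hf T q⟩ }
    have hW : W = ⊤ := by
      rcases hVsimple W with h | h
      · have hm : f x ∈ W := ⟨x, hx, rfl⟩
        rw [h] at hm
        exact absurd ((LieSubmodule.mem_bot _).1 hm) hfx
      · exact h
    have hmap : U.map f = ⊤ := by
      rw [eq_top_iff]
      intro v _
      have hv : v ∈ W := by rw [hW]; exact LieSubmodule.mem_top _
      exact hv
    have h1 := Submodule.finrank_map_le f U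
    rwa [hmap, finrank_top] at h1
  obtain ⟨x, hx, hx0⟩ := Submodule.exists_mem_ne_zero_of_ne_bot hne
  by_cases h1 : (e x).1 = 0
  · refine key (LinearMap.snd ℂ V V ∘ₗ e.toLinearMap) (fun T q => by simp [he]) ⟨x, hx, ?_⟩
    intro h2
    exact hx0 (e.map_eq_zero_iff.1 (Prod.ext h1 h2))
  · exact key (LinearMap.fst ℂ V V ∘ₗ e.toLinearMap) (fun T q => by simp [he]) ⟨x, hx, h1⟩

/-- A nonzero semisimple endomorphism of a finite-dimensional complex space has a nonzero
eigenvalue, namely any eigenvalue on a stable complement of its kernel. -/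
lemma exists_hasEigenvalue_ne_zero {Q : Type*} [AddCommGroup Q] [Module ℂ Q]
    [FiniteDimensional ℂ Q] (A : Module.End ℂ Q)
    (hAss : ∀ U : Submodule ℂ Q, (∀ x ∈ U, A x ∈ U) →
      ∃ W : Submodule ℂ Q, (∀ x ∈ W, A x ∈ W) ∧ IsCompl U W)
    (hAne : A ≠ 0) : ∃ α : ℂ, α ≠ 0 ∧ Module.End.HasEigenvalue A α := by
  obtain ⟨W, hW, hc⟩ := hAss (LinearMap.ker A) (fun x hx => by
    rw [LinearMap.mem_ker] at hx ⊢; rw [hx, map_zero])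
  have hWne : W ≠ ⊥ := by
    rintro rfl
    exact hAne (LinearMap.ker_eq_top.1 (eq_top_of_isCompl_bot hc))
  have : Nontrivial W := Submodule.nontrivial_iff_ne_bot.2 hWne
  obtain ⟨α, hα⟩ := Module.End.exists_eigenvalue (A.restrict hW)
  obtain ⟨w, hw⟩ := hα.exists_hasEigenvector
  have hw1 : A w = α • (w : Q) := by
    simpa using congrArg Subtype.val hw.apply_eq_smul
  have hw0 : (w : Q) ≠ 0 := fun h => hw.2 (Subtype.ext h)
  refine ⟨α, ?_, Module.End.hasEigenvalue_of_hasEigenvector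
    ⟨Module.End.mem_eigenspace_iff.2 hw1, hw0⟩⟩
  rintro rfl
  exact hw0 (Submodule.disjoint_def.1 hc.disjoint _
    (LinearMap.mem_ker.2 (by rw [hw1, zero_smul])) w.2)

theorem stmt_2 {g : Type*} [LieRing g] [LieAlgebra ℂ g] [FiniteDimensional ℂ g]
    (s : LieSubalgebra ℂ g)
    (V : Type*) [AddCommGroup V] [Module ℂ V] [FiniteDimensional ℂ V]
    [LieRingModule s V] [LieModule ℂ s V]
    -- V is a faithful s-module
    (hVfaith : ∀ T : s, (∀ v : V, ⁅T, v⁆ = 0) → T = 0)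
    -- V is a simple s-module
    (hVnontriv : Nontrivial V)
    (hVsimple : ∀ W : LieSubmodule ℂ s V, W = ⊥ ∨ W = ⊤)
    -- every s-equivariant bilinear map V × V → V vanishes
    (hVbil : ∀ b : V →ₗ[ℂ] V →ₗ[ℂ] V,
      (∀ (T : s) (x y : V), b ⁅T, x⁆ y + b x ⁅T, y⁆ = ⁅T, b x y⁆) → b = 0)
    (Z P : Submodule ℂ g)
    -- vector space decomposition g = Z ⊕ s ⊕ P
    (hspan : Z ⊔ s.toSubmodule ⊔ P = ⊤)
    (hindep : ∀ z ∈ Z, ∀ t ∈ s.toSubmodule, ∀ p ∈ P,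
      z + t + p = 0 → z = 0 ∧ t = 0 ∧ p = 0)
    -- Z is a line centralizing s
    (hZdim : Module.finrank ℂ Z = 1)
    (hZs : ∀ z ∈ Z, ∀ T ∈ s, ⁅z, T⁆ = (0 : g))
    -- P is ad(s)-stable
    (hPstab : ∀ (T : s) (p : g), p ∈ P → ⁅(T : g), p⁆ ∈ P)
    -- P is isomorphic as an s-module to V ⊕ V
    (e : P ≃ₗ[ℂ] V × V)
    (he : ∀ (T : s) (p : g) (hp : p ∈ P),
      e ⟨⁅(T : g), p⁆, hPstab T p hp⟩ = (⁅T, (e ⟨p, hp⟩).1⁆, ⁅T, (e ⟨p, hp⟩).2⁆))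
    -- hypotheses: [P,P] ⊆ h = Z ⊕ s and [h,P] ⊆ P
    (hPP : ∀ x ∈ P, ∀ y ∈ P, ⁅x, y⁆ ∈ Z ⊔ s.toSubmodule)
    (hhP : ∀ H ∈ Z ⊔ s.toSubmodule, ∀ p ∈ P, ⁅H, p⁆ ∈ P)
    -- a generator Z₀ of the line Z
    (Z₀ : g) (hZ₀mem : Z₀ ∈ Z) (hZ₀ne : Z₀ ≠ 0)
    -- the bilinear form ω on P, defined by [X,Y] − ω(X,Y)·Z₀ ∈ s
    (ω : ↥P →ₗ[ℂ] ↥P →ₗ[ℂ] ℂ)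
    (hω : ∀ x y : ↥P, ⁅(x : g), (y : g)⁆ - ω x y • Z₀ ∈ s.toSubmodule)
    -- ω is nondegenerate
    (hωnd : ∀ x : ↥P, (∀ y : ↥P, ω x y = 0) → x = 0)
    -- A := ad(Z₀)|_P
    (A : Module.End ℂ ↥P)
    (hA : ∀ p : ↥P, (A p : g) = ⁅Z₀, (p : g)⁆)
    -- A is semisimple and nonzero
    (hAss : ∀ U : Submodule ℂ ↥P, (∀ x ∈ U, A x ∈ U) →
      ∃ W : Submodule ℂ ↥P, (∀ x ∈ W, A x ∈ W) ∧ IsCompl U W)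
    (hAne : A ≠ 0)
    -- the structure is indecomposable
    (hindec : ¬ ∃ P₀ P₁ : Submodule ℂ ↥P, P₀ ≠ ⊥ ∧ P₁ ≠ ⊥ ∧ IsCompl P₀ P₁ ∧
      (∀ H ∈ Z ⊔ s.toSubmodule, ∀ x ∈ P₀, ∀ y : ↥P, (y : g) = ⁅H, (x : g)⁆ → y ∈ P₀) ∧
      (∀ H ∈ Z ⊔ s.toSubmodule, ∀ x ∈ P₁, ∀ y : ↥P, (y : g) = ⁅H, (x : g)⁆ → y ∈ P₁) ∧
      (∀ x ∈ P₀, (∀ y ∈ P₀, ω x y = 0) → x = 0) ∧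
      (∀ x ∈ P₁, (∀ y ∈ P₁, ω x y = 0) → x = 0) ∧
      (∀ x ∈ P₀, ∀ y ∈ P₁, ⁅(x : g), (y : g)⁆ = (0 : g))) :
    ∃ α : ℂ, α ≠ 0 ∧
      (∀ μ : ℂ, Module.End.HasEigenvalue A μ ↔ μ = α ∨ μ = -α) ∧
      ∀ L Lbar : Submodule ℂ ↥P,
        L = Module.End.eigenspace A α → Lbar = Module.End.eigenspace A (-α) →
        -- (i) P = L ⊕ L̄, both ad(h)-stable, Lagrangian, in ω-duality
        (IsCompl L Lbar ∧
          (∀ H ∈ Z ⊔ s.toSubmodule, ∀ x ∈ L, ∀ y : ↥P, (y : g) = ⁅H, (x : g)⁆ → y ∈ L) ∧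
          (∀ H ∈ Z ⊔ s.toSubmodule, ∀ x ∈ Lbar, ∀ y : ↥P, (y : g) = ⁅H, (x : g)⁆ → y ∈ Lbar) ∧
          (∀ x ∈ L, ∀ y ∈ L, ω x y = 0) ∧
          (∀ x ∈ Lbar, ∀ y ∈ Lbar, ω x y = 0) ∧
          (∀ x ∈ L, (∀ y ∈ Lbar, ω x y = 0) → x = 0) ∧
          (∀ y ∈ Lbar, (∀ x ∈ L, ω x y = 0) → y = 0)) ∧
        -- (ii) L and L̄ are abelian subalgebras of g
        (∀ x ∈ L, ∀ y ∈ L, ⁅(x : g), (y : g)⁆ = (0 : g)) ∧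
        (∀ x ∈ Lbar, ∀ y ∈ Lbar, ⁅(x : g), (y : g)⁆ = (0 : g)) ∧
        -- (iii) L and L̄ are simple s-modules
        (L ≠ ⊥ ∧ ∀ U : Submodule ℂ ↥P, U ≤ L →
          (∀ (T : s), ∀ x ∈ U, ∀ y : ↥P, (y : g) = ⁅(T : g), (x : g)⁆ → y ∈ U) →
          U = ⊥ ∨ U = L) ∧
        (Lbar ≠ ⊥ ∧ ∀ U : Submodule ℂ ↥P, U ≤ Lbar →
          (∀ (T : s), ∀ x ∈ U, ∀ y : ↥P, (y : g) = ⁅(T : g), (x : g)⁆ → y ∈ U) →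
          U = ⊥ ∨ U = Lbar) := by
  -- `Z₀` spans a complement of `s` in `h`, so the `Z₀`-coefficient is well defined
  have hZ0s : ∀ c : ℂ, c • Z₀ ∈ s.toSubmodule → c = 0 := by
    intro c hc
    have := (hindep (c • Z₀) (Z.smul_mem _ hZ₀mem) (-(c • Z₀)) (neg_mem hc) 0 P.zero_mem
      (by simp)).1
    exact (smul_eq_zero.1 this).resolve_right hZ₀ne
  -- the Jacobi identity: `A` is skew for the bracket on `P`
  have hskew : ∀ x y : P, ⁅(A x : g), (y : g)⁆ + ⁅(x : g), (A y : g)⁆ = 0 := by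
    intro x y
    rw [hA, hA, ← leibniz_lie]
    have h := hZs Z₀ hZ₀mem _ (hω x y)
    simpa using h
  have hωA : ∀ x y : P, ω (A x) y + ω x (A y) = 0 := by
    intro x y
    apply hZ0s
    have h := add_mem (hω (A x) y) (hω x (A y))
    have h2 : ⁅(A x : g), (y : g)⁆ - ω (A x) y • Z₀ + (⁅(x : g), (A y : g)⁆ - ω x (A y) • Z₀)
        = -((ω (A x) y + ω x (A y)) • Z₀) := by
      linear_combination (norm := module) hskew x y
    rw [h2] at h
    exact neg_mem_iff.1 h
  have hωsymm : ∀ x y : P, ω x y + ω y x = 0 := by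
    intro x y
    apply hZ0s
    have h := add_mem (hω x y) (hω y x)
    have h2 : ⁅(x : g), (y : g)⁆ - ω x y • Z₀ + (⁅(y : g), (x : g)⁆ - ω y x • Z₀)
        = -((ω x y + ω y x) • Z₀) := by
      rw [← lie_skew (x : g) (y : g)]
      module
    rw [h2] at h
    exact neg_mem_iff.1 h
  have hcomm : ∀ β : ℂ, β ≠ 0 → ∀ x ∈ Module.End.eigenspace A β,
      ∀ y ∈ Module.End.eigenspace A β, ⁅(x : g), (y : g)⁆ = 0 := by
    intro β hβ x hx y hy
    have h := hskew x y
    rw [Module.End.mem_eigenspace_iff.1 hx, Module.End.mem_eigenspace_iff.1 hy] at h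
    simp only [Submodule.coe_smul, smul_lie, lie_smul] at h
    rw [← two_smul ℂ, smul_smul] at h
    exact (smul_eq_zero.1 h).resolve_left (mul_ne_zero two_ne_zero hβ)
  have hiso : ∀ β : ℂ, β ≠ 0 → ∀ x ∈ Module.End.eigenspace A β,
      ∀ y ∈ Module.End.eigenspace A β, ω x y = 0 := by
    intro β hβ x hx y hy
    apply hZ0s
    have h := hω x y
    rw [hcomm β hβ x hx y hy, zero_sub] at h
    exact neg_mem_iff.1 h
  -- eigenspaces of `A` are stable under `h`, because `Z₀` centralizes `h`
  have hZH : ∀ H ∈ Z ⊔ s.toSubmodule, ⁅Z₀, H⁆ = 0 := by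
    intro H hH
    obtain ⟨z, hz, t, ht, rfl⟩ := Submodule.mem_sup.1 hH
    obtain ⟨c, hc⟩ := exists_smul_eq_of_finrank_eq_one hZdim
      (x := (⟨Z₀, hZ₀mem⟩ : Z)) (fun h => hZ₀ne (congrArg Subtype.val h)) ⟨z, hz⟩
    have hc' : c • Z₀ = z := congrArg Subtype.val hc
    rw [lie_add, ← hc', lie_smul, lie_self, smul_zero, zero_add]
    exact hZs Z₀ hZ₀mem t ht
  have hstab : ∀ β : ℂ, ∀ H ∈ Z ⊔ s.toSubmodule, ∀ x ∈ Module.End.eigenspace A β,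
      ∀ y : P, (y : g) = ⁅H, (x : g)⁆ → y ∈ Module.End.eigenspace A β := by
    intro β H hH x hx y hy
    rw [Module.End.mem_eigenspace_iff] at hx ⊢
    apply Subtype.ext
    rw [hA, hy, leibniz_lie, hZH H hH, zero_lie, zero_add, ← hA, hx, Submodule.coe_smul,
      Submodule.coe_smul, lie_smul, hy]
  have hdim : ∀ U : Submodule ℂ P,
      (∀ (T : s), ∀ x ∈ U, ∀ y : P, (y : g) = ⁅(T : g), (x : g)⁆ → y ∈ U) → U ≠ ⊥ →
      Module.finrank ℂ V ≤ Module.finrank ℂ U := by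
    intro U hU hne
    exact finrank_le_of_stable hVsimple
      (fun (T : s) (p : P) => (⟨⁅(T : g), (p : g)⁆, hPstab T p p.2⟩ : P)) e
      (fun T q => he T q q.2) U (fun T x hx => hU T x hx _ rfl) hne
  have hdimP : Module.finrank ℂ P = Module.finrank ℂ V + Module.finrank ℂ V := by
    rw [e.finrank_eq, Module.finrank_prod]
  obtain ⟨α, hα, hαA⟩ := exists_hasEigenvalue_ne_zero A hAss hAne
  -- if `-α` were not an eigenvalue, `A + α` would be onto, and an `α`-eigenvector is
  -- `ω`-orthogonal to its range
  have hαA' : Module.End.HasEigenvalue A (-α) := by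
    by_contra hcon
    obtain ⟨x, hx, hx0⟩ := hαA.exists_hasEigenvector
    have hx1 := Module.End.mem_eigenspace_iff.1 hx
    have hker : LinearMap.ker (A + α • (1 : Module.End ℂ P)) = ⊥ := by
      rw [Submodule.eq_bot_iff]
      intro y hy
      by_contra hy0
      apply hcon
      refine Module.End.hasEigenvalue_of_hasEigenvector (x := y)
        ⟨Module.End.mem_eigenspace_iff.2 ?_, hy0⟩
      have hy' : A y + α • y = 0 := by simpa using hy
      rw [neg_smul]
      exact eq_neg_of_add_eq_zero_left hy'
    have hsurj : Function.Surjective (A + α • (1 : Module.End ℂ P)) :=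
      LinearMap.injective_iff_surjective.1 (LinearMap.ker_eq_bot.1 hker)
    apply hx0
    apply hωnd
    intro y
    obtain ⟨z, rfl⟩ := hsurj y
    have h := hωA x z
    rw [hx1] at h
    simp only [map_smul, LinearMap.smul_apply, smul_eq_mul] at h
    simp only [LinearMap.add_apply, LinearMap.smul_apply, Module.End.one_apply, map_add, map_smul,
      smul_eq_mul]
    rw [add_comm]
    exact h
  have hneα : α ≠ -α := fun h => hα (self_eq_neg.1 h)
  have hdisj : Disjoint (Module.End.eigenspace A α) (Module.End.eigenspace A (-α)) :=
    Module.End.disjoint_genEigenspace A hneα 1 1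
  have hsS : ∀ T : s, (T : g) ∈ Z ⊔ s.toSubmodule := fun T => Submodule.mem_sup_right T.2
  have hd1 := hdim (Module.End.eigenspace A α) (fun T x hx y hy => hstab α T (hsS T) x hx y hy) hαA
  have hd2 := hdim (Module.End.eigenspace A (-α))
    (fun T x hx y hy => hstab (-α) T (hsS T) x hx y hy) hαA'
  have hsum := Submodule.finrank_add_finrank_le_of_disjoint hdisj
  have hcompl : IsCompl (Module.End.eigenspace A α) (Module.End.eigenspace A (-α)) := by
    refine ⟨hdisj, codisjoint_iff.2 (Submodule.eq_top_of_finrank_eq ?_)⟩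
    have h := Submodule.finrank_sup_add_finrank_inf_eq (Module.End.eigenspace A α)
      (Module.End.eigenspace A (-α))
    rw [hdisj.eq_bot, finrank_bot] at h
    omega
  have hdec : ∀ y : P, ∃ l ∈ Module.End.eigenspace A α, ∃ m ∈ Module.End.eigenspace A (-α),
      l + m = y := fun y =>
    Submodule.mem_sup.1 (by rw [hcompl.sup_eq_top]; exact Submodule.mem_top)
  have hsimple : ∀ L U : Submodule ℂ P, Module.finrank ℂ L ≤ Module.finrank ℂ V → U ≤ L →
      (∀ (T : s), ∀ x ∈ U, ∀ y : P, (y : g) = ⁅(T : g), (x : g)⁆ → y ∈ U) → U = ⊥ ∨ U = L := by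
    intro L U hL hUL hU
    by_cases hne : U = ⊥
    · exact Or.inl hne
    · exact Or.inr (Submodule.eq_of_le_of_finrank_le hUL (hL.trans (hdim U hU hne)))
  refine ⟨α, hα, ?_, ?_⟩
  · intro μ
    constructor
    · intro hμ
      by_contra! hcon
      obtain ⟨x, hx, hx0⟩ := hμ.exists_hasEigenvector
      have hx1 := Module.End.mem_eigenspace_iff.1 hx
      obtain ⟨l, hl, m, hm, rfl⟩ := hdec x
      rw [map_add, Module.End.mem_eigenspace_iff.1 hl, Module.End.mem_eigenspace_iff.1 hm] at hx1
      -- the two components of `(A - μ) (l + m) = 0` vanish separately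
      have h1 : (α - μ) • l = (μ + α) • m := by
        linear_combination (norm := module) hx1
      have h2 : (α - μ) • l = 0 := Submodule.disjoint_def.1 hdisj _
        (Submodule.smul_mem _ _ hl) (h1 ▸ Submodule.smul_mem _ _ hm)
      have hl0 := (smul_eq_zero.1 h2).resolve_left (sub_ne_zero.2 hcon.1.symm)
      have hm0 := (smul_eq_zero.1 (h1.symm.trans h2)).resolve_left
        (fun h => hcon.2 (eq_neg_of_add_eq_zero_left h))
      exact hx0 (by rw [hl0, hm0, add_zero])
    · rintro (rfl | rfl)
      · exact hαA
      · exact hαA'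
  · rintro L Lbar rfl rfl
    have hα' : -α ≠ 0 := neg_ne_zero.2 hα
    refine ⟨⟨hcompl, hstab α, hstab (-α), hiso α hα, hiso (-α) hα', ?_, ?_⟩, hcomm α hα,
      hcomm (-α) hα', ⟨hαA, fun U => hsimple _ U (by omega)⟩,
      ⟨hαA', fun U => hsimple _ U (by omega)⟩⟩
    · intro x hx h
      apply hωnd
      intro y
      obtain ⟨l, hl, m, hm, rfl⟩ := hdec y
      rw [map_add, hiso α hα x hx l hl, h m hm, add_zero]
    · intro y hy h
      apply hωnd
      intro x
      obtain ⟨l, hl, m, hm, rfl⟩ := hdec x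
      have h1 := hωsymm l y
      rw [h l hl, zero_add] at h1
      rw [map_add, h1, hiso (-α) hα' y hy m hm, add_zero]
end

section
/- Let (g, s, V, Z, P) be a generalized kinematical Lie algebra over 𝕂. If [X, Y] ∈ s for all X, Y ∈ P (i.e. the form Ω with values in h/s vanishes identically), then [X, Y] = 0 for all X, Y ∈ P; in other words, P is an abelian Lie subalgebra of g and the associated symmetric space is flat. -/
/-!
Write `P = V₁ ⊕ V₂` with `V₁, V₂ ≅ V`. If `[P, P] ⊆ s`, the Jacobi identity for two vectors of
`V₁` and one of `V₂` compares a vector of `V₂` with one of `V₁`, so both vanish. Faithfulness of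
`V` then gives `[V₁, V₁] = [V₂, V₂] = 0`, and `A x y := [x₁, y₂] ∈ s` has the property that
`A x y • z` is symmetric in all three variables. Hence `L = V₁ ⊕ s ⊕ V₂` is a 3-graded Lie algebra.

Since `A x x` acts as a derivation of the symmetric triple product, `(A x x)² = 0` on `V`, so by
polarization every `A x y` has trace zero on `V` (`trace_triple_eq_zero`). Every contribution to
the Killing form of `L` on `V₁ × V₂` is such a trace, so `P` lies in the Killing radical `J` of `L`
(`killingForm_grade_eq_zero`). By Cartan's criterion `[J, J]`, which contains `[P, P]`, acts
nilpotently on `L`, and therefore on `V`. By Engel's theorem the ideal `s ∩ [J, J]` of `s` has a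
nonzero fixed vector in `V`; its fixed vectors form an `s`-submodule of the simple module `V`, so
the ideal acts trivially, and it is zero by faithfulness (`triple_eq_zero`).
-/

open LieModule in
/-- An `S`-equivariant, totally symmetric triple product `⁅A x y, z⁆` has traceless
multiplications: `(A x x)²` acts as zero, and the general case follows by polarization. -/
theorem trace_triple_eq_zero {K S V : Type*} [Field K] [CharZero K]
    [LieRing S] [LieAlgebra K S]
    [AddCommGroup V] [Module K V] [FiniteDimensional K V] [LieRingModule S V] [LieModule K S V]
    (A : V →ₗ[K] V →ₗ[K] S)
    (h13 : ∀ x y z, ⁅A x y, z⁆ = ⁅A z y, x⁆) (h23 : ∀ x y z, ⁅A x y, z⁆ = ⁅A x z, y⁆)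
    (hder : ∀ (T : S) x y, ⁅T, A x y⁆ = A ⁅T, x⁆ y + A x ⁅T, y⁆) (x y : V) :
    LinearMap.trace K V (toEnd K S V (A x y)) = 0 := by
  have h12 : ∀ x y z, ⁅A x y, z⁆ = ⁅A y x, z⁆ := fun x y z => by
    rw [h13, h23, h13]
  have hC : ∀ (T : S) (x y z : V),
      ⁅T, ⁅A x y, z⁆⁆ = ⁅A ⁅T, x⁆ y, z⁆ + ⁅A x ⁅T, y⁆, z⁆ + ⁅A x y, ⁅T, z⁆⁆ :=
    fun T x y z => by rw [leibniz_lie, hder, add_lie]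
  have hsq : ∀ x h : V, ⁅A x x, ⁅A x x, h⁆⁆ = 0 := fun x h => by
    -- the derivation `A x x` applied to `⁅A x x, h⁆`
    have h1 : ⁅A ⁅A x x, x⁆ x, h⁆ = 0 := by
      have := hC (A x x) x x h
      rw [h12 x ⁅A x x, x⁆ h, right_eq_add, ← two_smul K] at this
      simpa using this
    -- the derivation `A x h` applied to `⁅A x x, x⁆`
    have h2 := hC (A x h) x x x
    have e1 : ⁅A x h, ⁅A x x, x⁆⁆ = 0 := by
      rw [h13, h23, h1]
    have e2 : ⁅A x h, x⁆ = ⁅A x x, h⁆ := h23 x h x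
    have e3 : ∀ w, ⁅A w x, x⁆ = ⁅A x x, w⁆ := fun w => h13 w x x
    have e4 : ∀ w, ⁅A x w, x⁆ = ⁅A x x, w⁆ := fun w => h23 x w x
    rw [e1, e2, e3, e4] at h2
    have h3 : (3 : K) • ⁅A x x, ⁅A x x, h⁆⁆ = 0 := by
      rw [h2]; module
    simpa using h3
  have htr : ∀ x : V, LinearMap.trace K V (toEnd K S V (A x x)) = 0 := fun x => by
    refine (LinearMap.isNilpotent_trace_of_isNilpotent ⟨2, ?_⟩).eq_zero
    ext h
    simpa [pow_two] using hsq x h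
  have hsym : toEnd K S V (A y x) = toEnd K S V (A x y) := by
    ext z; exact h12 y x z
  have h := htr (x + y)
  simp only [map_add, LinearMap.add_apply, htr, hsym, zero_add, add_zero] at h
  rw [← two_smul K] at h
  simpa using h

open LieModule in
/-- In a 3-graded Lie algebra `L = V₁ ⊕ S ⊕ V₂` with totally symmetric triple product, the
component `V₁ = range i₁` is orthogonal to everything for the Killing form. -/
theorem killingForm_grade_eq_zero {K S V L : Type*} [Field K] [CharZero K]
    [LieRing S] [LieAlgebra K S] [FiniteDimensional K S]
    [AddCommGroup V] [Module K V] [FiniteDimensional K V] [LieRingModule S V] [LieModule K S V]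
    [LieRing L] [LieAlgebra K L] [FiniteDimensional K L]
    (A : V →ₗ[K] V →ₗ[K] S)
    (h13 : ∀ x y z, ⁅A x y, z⁆ = ⁅A z y, x⁆) (h23 : ∀ x y z, ⁅A x y, z⁆ = ⁅A x z, y⁆)
    (htr : ∀ x y, LinearMap.trace K V (toEnd K S V (A x y)) = 0)
    (i₁ i₂ : V →ₗ[K] L) (j : S →ₗ⁅K⁆ L)
    (p₁ p₂ : L →ₗ[K] V) (p₀ : L →ₗ[K] S)
    (hid : ∀ l, i₁ (p₁ l) + j (p₀ l) + i₂ (p₂ l) = l)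
    (p01 : ∀ x, p₀ (i₁ x) = 0) (p00 : ∀ T, p₀ (j T) = T)
    (p21 : ∀ x, p₂ (i₁ x) = 0) (p20 : ∀ T, p₂ (j T) = 0)
    (p22 : ∀ x, p₂ (i₂ x) = x)
    (b11 : ∀ x y, ⁅i₁ x, i₁ y⁆ = 0)
    (b12 : ∀ x y, ⁅i₁ x, i₂ y⁆ = j (A x y))
    (b01 : ∀ T x, ⁅j T, i₁ x⁆ = i₁ ⁅T, x⁆) (b02 : ∀ T x, ⁅j T, i₂ x⁆ = i₂ ⁅T, x⁆)
    (l : L) (x : V) : killingForm K L l (i₁ x) = 0 := by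
  have b10 : ∀ x T, ⁅i₁ x, j T⁆ = - i₁ ⁅T, x⁆ := fun x T => by rw [← lie_skew, b01]
  have b20 : ∀ x T, ⁅i₂ x, j T⁆ = - i₂ ⁅T, x⁆ := fun x T => by rw [← lie_skew, b02]
  have b21 : ∀ x y, ⁅i₂ x, i₁ y⁆ = - j (A y x) := fun x y => by rw [← lie_skew, b12]
  -- the trace is the sum of the traces of the three diagonal blocks
  have htrace : ∀ N : L →ₗ[K] L, LinearMap.trace K L N = LinearMap.trace K V (p₁ ∘ₗ N ∘ₗ i₁)
      + LinearMap.trace K S (p₀ ∘ₗ N ∘ₗ (j : S →ₗ[K] L))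
      + LinearMap.trace K V (p₂ ∘ₗ N ∘ₗ i₂) := fun N => by
    have hN : N = (N ∘ₗ i₁) ∘ₗ p₁ + (N ∘ₗ (j : S →ₗ[K] L)) ∘ₗ p₀ + (N ∘ₗ i₂) ∘ₗ p₂ := by
      ext l
      conv_lhs => rw [← hid l]
      simp
    conv_lhs => rw [hN]
    rw [map_add, map_add, LinearMap.trace_comp_comm' _ p₁, LinearMap.trace_comp_comm' _ p₀,
      LinearMap.trace_comp_comm' _ p₂]
  rw [← hid l, map_add, map_add, LinearMap.add_apply, LinearMap.add_apply]
  have k1 : ∀ a, killingForm K L (i₁ a) (i₁ x) = 0 := fun a => by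
    rw [LieModule.traceForm_apply_apply, htrace]
    have q1 : p₁ ∘ₗ (toEnd K L L (i₁ a) ∘ₗ toEnd K L L (i₁ x)) ∘ₗ i₁ = 0 := by
      ext z; simp [b11]
    have q0 : p₀ ∘ₗ (toEnd K L L (i₁ a) ∘ₗ toEnd K L L (i₁ x)) ∘ₗ (j : S →ₗ[K] L) = 0 := by
      ext z; simp [b10, b11]
    have q2 : p₂ ∘ₗ (toEnd K L L (i₁ a) ∘ₗ toEnd K L L (i₁ x)) ∘ₗ i₂ = 0 := by
      ext z; simp [b12, b10, p21]
    rw [q1, q0, q2]; simp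
  have k0 : ∀ T, killingForm K L (j T) (i₁ x) = 0 := fun T => by
    rw [LieModule.traceForm_apply_apply, htrace]
    have q1 : p₁ ∘ₗ (toEnd K L L (j T) ∘ₗ toEnd K L L (i₁ x)) ∘ₗ i₁ = 0 := by
      ext z; simp [b11]
    have q0 : p₀ ∘ₗ (toEnd K L L (j T) ∘ₗ toEnd K L L (i₁ x)) ∘ₗ (j : S →ₗ[K] L) = 0 := by
      ext z; simp [b10, b01, p01]
    have q2 : p₂ ∘ₗ (toEnd K L L (j T) ∘ₗ toEnd K L L (i₁ x)) ∘ₗ i₂ = 0 := by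
      ext z; simp only [LinearMap.comp_apply, toEnd_apply_apply, b12, ← LieHom.map_lie, p20,
        LinearMap.zero_apply]
    rw [q1, q0, q2]; simp
  have k2 : ∀ b, killingForm K L (i₂ b) (i₁ x) = 0 := fun b => by
    rw [LieModule.traceForm_apply_apply, htrace]
    have q1 : p₁ ∘ₗ (toEnd K L L (i₂ b) ∘ₗ toEnd K L L (i₁ x)) ∘ₗ i₁ = 0 := by
      ext z; simp [b11]
    have q0 : p₀ ∘ₗ (toEnd K L L (i₂ b) ∘ₗ toEnd K L L (i₁ x)) ∘ₗ (j : S →ₗ[K] L) =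
        A.flip b ∘ₗ (toEnd K S V : S →ₗ[K] Module.End K V).flip x := by
      ext z; simp [b10, b21, p00]
    -- moving the factors around turns the trace over `S` into one over `V`
    have q0' : (toEnd K S V : S →ₗ[K] Module.End K V).flip x ∘ₗ A.flip b
        = toEnd K S V (A x b) := by
      ext z; simp [h13 z b x]
    have q2 : p₂ ∘ₗ (toEnd K L L (i₂ b) ∘ₗ toEnd K L L (i₁ x)) ∘ₗ i₂ =
        - toEnd K S V (A x b) := by
      ext z; simp [b12, b20, p22, h23 x z b]
    rw [q1, q0, q2, LinearMap.trace_comp_comm', q0', map_neg, htr]; simp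
  rw [k1, k0, k2]; simp

open LieModule in
/-- In a 3-graded Lie algebra `L = V₁ ⊕ S ⊕ V₂` with totally symmetric triple product, where `V` is
a simple faithful `S`-module, the bracket `V₁ × V₂ → S` vanishes. -/
theorem triple_eq_zero {K S V L : Type*} [Field K] [CharZero K]
    [LieRing S] [LieAlgebra K S] [FiniteDimensional K S]
    [AddCommGroup V] [Module K V] [FiniteDimensional K V] [LieRingModule S V] [LieModule K S V]
    [LieRing L] [LieAlgebra K L] [FiniteDimensional K L]
    (hfaith : ∀ T : S, (∀ v : V, ⁅T, v⁆ = 0) → T = 0) [Nontrivial V]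
    (hsimple : ∀ W : LieSubmodule K S V, W = ⊥ ∨ W = ⊤)
    (A : V →ₗ[K] V →ₗ[K] S)
    (h13 : ∀ x y z, ⁅A x y, z⁆ = ⁅A z y, x⁆) (h23 : ∀ x y z, ⁅A x y, z⁆ = ⁅A x z, y⁆)
    (hder : ∀ (T : S) x y, ⁅T, A x y⁆ = A ⁅T, x⁆ y + A x ⁅T, y⁆)
    (i₁ i₂ : V →ₗ[K] L) (j : S →ₗ⁅K⁆ L)
    (p₁ p₂ : L →ₗ[K] V) (p₀ : L →ₗ[K] S)
    (hid : ∀ l, i₁ (p₁ l) + j (p₀ l) + i₂ (p₂ l) = l)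
    (p11 : ∀ x, p₁ (i₁ x) = x) (p10 : ∀ T, p₁ (j T) = 0) (p12 : ∀ x, p₁ (i₂ x) = 0)
    (p01 : ∀ x, p₀ (i₁ x) = 0) (p00 : ∀ T, p₀ (j T) = T) (p02 : ∀ x, p₀ (i₂ x) = 0)
    (p21 : ∀ x, p₂ (i₁ x) = 0) (p20 : ∀ T, p₂ (j T) = 0) (p22 : ∀ x, p₂ (i₂ x) = x)
    (b11 : ∀ x y, ⁅i₁ x, i₁ y⁆ = 0) (b22 : ∀ x y, ⁅i₂ x, i₂ y⁆ = 0)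
    (b12 : ∀ x y, ⁅i₁ x, i₂ y⁆ = j (A x y))
    (b01 : ∀ T x, ⁅j T, i₁ x⁆ = i₁ ⁅T, x⁆) (b02 : ∀ T x, ⁅j T, i₂ x⁆ = i₂ ⁅T, x⁆)
    (x y : V) : A x y = 0 := by
  have htr := trace_triple_eq_zero A h13 h23 hder
  have k1 := killingForm_grade_eq_zero A h13 h23 htr i₁ i₂ j p₁ p₂ p₀ hid p01 p00 p21 p20 p22
    b11 b12 b01 b02
  -- exchanging `V₁` and `V₂` replaces `A` by minus its transpose
  have k2 := killingForm_grade_eq_zero (-A.flip)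
    (fun x y z => by simp [h23 y x z]) (fun x y z => by simp [h13 y x z])
    (fun x y => by simp [htr]) i₂ i₁ j p₂ p₁ p₀
    (fun l => by conv_rhs => rw [← hid l]
                 abel) p02 p00 p12 p10 p11
    b22 (fun x y => by rw [← lie_skew, b12]; simp) b02 b01
  let J : LieIdeal K L := LieIdeal.killingCompl K L ⊤
  have hJ1 : ∀ x, i₁ x ∈ J := fun x => (LieIdeal.mem_killingCompl K L ⊤).mpr fun l _ => k1 l x
  have hJ2 : ∀ x, i₂ x ∈ J := fun x => (LieIdeal.mem_killingCompl K L ⊤).mpr fun l _ => k2 l x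
  have tf : traceForm K J L = 0 := by
    ext ⟨u, hu⟩ ⟨w, hw⟩
    exact (LieIdeal.mem_killingCompl K L ⊤).mp hw u (LieSubmodule.mem_top _)
  have hnil : LieModule.IsNilpotent (LieAlgebra.derivedSeries K J 1) L :=
    isNilpotent_derivedSeries_of_traceForm_eq_zero tf
  let D : LieIdeal K L := ⁅J, J⁆
  let I : LieIdeal K S := D.comap j
  have hAI : ∀ x y, A x y ∈ I := fun x y => by
    rw [LieIdeal.mem_comap, ← b12]
    exact LieSubmodule.lie_mem_lie (hJ1 x) (hJ2 y)
  have hInil : ∀ T ∈ I, IsNilpotent (toEnd K S V T) := fun T hT => by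
    rw [LieIdeal.mem_comap] at hT
    have hTJ : j T ∈ J := LieSubmodule.lie_le_left J J hT
    obtain ⟨n, hn⟩ := (LieModule.isNilpotent_iff_forall' (R := K)).mp hnil ⟨⟨j T, hTJ⟩, by
      rwa [LieIdeal.derivedSeries_eq_derivedSeriesOfIdeal_comap, LieIdeal.mem_comap]⟩
    replace hn : (toEnd K L L (j T)) ^ n = 0 := hn
    have hpow : ∀ (m : ℕ) (v : V),
        ((toEnd K L L (j T)) ^ m) (i₁ v) = i₁ (((toEnd K S V T) ^ m) v) := fun m => by
      induction m with
      | zero => simp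
      | succ m ih => intro v; rw [pow_succ', pow_succ', Module.End.mul_apply, ih]; simp [b01]
    refine ⟨n, ?_⟩
    ext v
    rw [← p11 (((toEnd K S V T) ^ n) v), ← hpow, hn]
    simp
  have hIV : LieModule.IsNilpotent I V :=
    (LieModule.isNilpotent_iff_forall' (R := K)).mpr fun T => hInil T.1 T.2
  -- the fixed vectors of the ideal `I`
  let W : LieSubmodule K S V :=
    { carrier := {v | ∀ T ∈ I, ⁅T, v⁆ = 0}
      add_mem' := fun {a b} ha hb T hT => by rw [lie_add, ha T hT, hb T hT, add_zero]
      zero_mem' := fun T _ => lie_zero T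
      smul_mem' := fun c v hv T hT => by rw [lie_smul, hv T hT, smul_zero]
      lie_mem := fun {U v} hv T hT => by
        rw [leibniz_lie, hv T hT, lie_zero, add_zero]
        exact hv _ (lie_mem_left K S I T U hT) }
  have hW : W ≠ ⊥ := by
    have := nontrivial_max_triv_of_isNilpotent K I V
    obtain ⟨v, hv⟩ := exists_ne (0 : maxTrivSubmodule K I V)
    intro hbot
    have hvW : (v : V) ∈ W := fun T hT => (mem_maxTrivSubmodule K I V v.1).mp v.2 ⟨T, hT⟩
    rw [hbot, LieSubmodule.mem_bot] at hvW
    exact hv (Subtype.ext hvW)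
  have hW' : W = ⊤ := (hsimple W).resolve_left hW
  refine hfaith _ fun v => ?_
  have hv : v ∈ W := hW' ▸ LieSubmodule.mem_top v
  exact hv _ (hAI x y)

/- STATEMENT 5: If all brackets of elements of P lie in s, then all brackets of elements of P vanish: P is an abelian subalgebra of g (the associated symmetric space is flat). -/

theorem stmt_5 {𝕂 : Type*} [RCLike 𝕂]
    {g : Type*} [LieRing g] [LieAlgebra 𝕂 g] [FiniteDimensional 𝕂 g]
    (s : LieSubalgebra 𝕂 g)
    (V : Type*) [AddCommGroup V] [Module 𝕂 V] [FiniteDimensional 𝕂 V]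
    [LieRingModule s V] [LieModule 𝕂 s V]
    -- V is a faithful s-module
    (hVfaith : ∀ T : s, (∀ v : V, ⁅T, v⁆ = 0) → T = 0)
    -- V is a simple s-module
    (hVnontriv : Nontrivial V)
    (hVsimple : ∀ W : LieSubmodule 𝕂 s V, W = ⊥ ∨ W = ⊤)
    -- every s-equivariant bilinear map V × V → V vanishes
    (hVbil : ∀ b : V →ₗ[𝕂] V →ₗ[𝕂] V,
      (∀ (T : s) (x y : V), b ⁅T, x⁆ y + b x ⁅T, y⁆ = ⁅T, b x y⁆) → b = 0)
    (Z P : Submodule 𝕂 g)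
    -- vector space decomposition g = Z ⊕ s ⊕ P
    (hspan : Z ⊔ s.toSubmodule ⊔ P = ⊤)
    (hindep : ∀ z ∈ Z, ∀ t ∈ s.toSubmodule, ∀ p ∈ P,
      z + t + p = 0 → z = 0 ∧ t = 0 ∧ p = 0)
    -- Z is a line centralizing s
    (hZdim : Module.finrank 𝕂 Z = 1)
    (hZs : ∀ z ∈ Z, ∀ T ∈ s, ⁅z, T⁆ = (0 : g))
    -- P is ad(s)-stable
    (hPstab : ∀ (T : s) (p : g), p ∈ P → ⁅(T : g), p⁆ ∈ P)
    -- P is isomorphic as an s-module to V ⊕ V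
    (e : P ≃ₗ[𝕂] V × V)
    (he : ∀ (T : s) (p : g) (hp : p ∈ P),
      e ⟨⁅(T : g), p⁆, hPstab T p hp⟩ = (⁅T, (e ⟨p, hp⟩).1⁆, ⁅T, (e ⟨p, hp⟩).2⁆))
    -- hypothesis: [X,Y] ∈ s for all X, Y ∈ P
    (hPPs : ∀ x ∈ P, ∀ y ∈ P, ⁅x, y⁆ ∈ s.toSubmodule) :
    ∀ x ∈ P, ∀ y ∈ P, ⁅x, y⁆ = (0 : g) := by
  classical
  let i₁ : V →ₗ[𝕂] g := P.subtype ∘ₗ e.symm.toLinearMap ∘ₗ LinearMap.inl 𝕂 V V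
  let i₂ : V →ₗ[𝕂] g := P.subtype ∘ₗ e.symm.toLinearMap ∘ₗ LinearMap.inr 𝕂 V V
  have i₁P : ∀ x, i₁ x ∈ P := fun x => (e.symm (x, 0)).2
  have i₂P : ∀ x, i₂ x ∈ P := fun x => (e.symm (0, x)).2
  have hsplit : ∀ (p : g) (hp : p ∈ P), p = i₁ (e ⟨p, hp⟩).1 + i₂ (e ⟨p, hp⟩).2 := fun p hp => by
    have : (⟨p, hp⟩ : P) = e.symm ((e ⟨p, hp⟩).1, 0) + e.symm (0, (e ⟨p, hp⟩).2) := by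
      rw [← map_add]; simp
    exact congrArg Subtype.val this
  have hinj : ∀ x y, i₁ x + i₂ y = 0 → x = 0 ∧ y = 0 := fun x y h => by
    have h' : e.symm (x, 0) + e.symm (0, y) = 0 := Subtype.ext h
    rw [← map_add, LinearEquiv.map_eq_zero_iff] at h'
    simpa using h'
  have b01 : ∀ (T : s) x, ⁅(T : g), i₁ x⁆ = i₁ ⁅T, x⁆ := fun T x => by
    have h := he T (i₁ x) (i₁P x)
    have h1 : e ⟨i₁ x, i₁P x⟩ = (x, 0) := e.apply_symm_apply (x, 0)
    rw [h1, lie_zero, ← LinearEquiv.eq_symm_apply] at h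
    exact congrArg Subtype.val h
  have b02 : ∀ (T : s) x, ⁅(T : g), i₂ x⁆ = i₂ ⁅T, x⁆ := fun T x => by
    have h := he T (i₂ x) (i₂P x)
    have h1 : e ⟨i₂ x, i₂P x⟩ = (0, x) := e.apply_symm_apply (0, x)
    rw [h1, lie_zero, ← LinearEquiv.eq_symm_apply] at h
    exact congrArg Subtype.val h
  let A : V →ₗ[𝕂] V →ₗ[𝕂] s := LinearMap.mk₂ 𝕂
    (fun x y => ⟨⁅i₁ x, i₂ y⁆, hPPs _ (i₁P x) _ (i₂P y)⟩)
    (fun x x' y => Subtype.ext (by simp)) (fun c x y => Subtype.ext (by simp))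
    (fun x y y' => Subtype.ext (by simp)) (fun c x y => Subtype.ext (by simp))
  have b12 : ∀ x y, ⁅i₁ x, i₂ y⁆ = (A x y : g) := fun x y => rfl
  have b21 : ∀ x y, ⁅i₂ y, i₁ x⁆ = ((-A x y : s) : g) := fun x y => by
    rw [← lie_skew, b12]; rfl
  -- the Jacobi identity on `V₁ × V₁ × V₂`, separated into its two components
  have jac1 : ∀ x y, ⁅i₁ x, i₁ y⁆ = 0 ∧ ∀ z, ⁅A x z, y⁆ = ⁅A y z, x⁆ := fun x y => by
    let B : s := ⟨⁅i₁ x, i₁ y⁆, hPPs _ (i₁P x) _ (i₁P y)⟩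
    have hz : ∀ z, ⁅A y z, x⁆ - ⁅A x z, y⁆ = 0 ∧ ⁅B, z⁆ = 0 := fun z => by
      have h : ⁅(B : g), i₂ z⁆ = ⁅i₁ x, ⁅i₁ y, i₂ z⁆⁆ - ⁅i₁ y, ⁅i₁ x, i₂ z⁆⁆ := lie_lie _ _ _
      rw [b02, b12, b12, ← lie_skew (i₁ x), ← lie_skew (i₁ y), b01, b01] at h
      refine hinj _ _ ?_
      rw [h, map_sub]; abel
    exact ⟨congrArg Subtype.val (hVfaith B fun z => (hz z).2), fun z => (sub_eq_zero.mp (hz z).1).symm⟩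
  have jac2 : ∀ x y, ⁅i₂ x, i₂ y⁆ = 0 ∧ ∀ z, ⁅A z x, y⁆ = ⁅A z y, x⁆ := fun x y => by
    let B : s := ⟨⁅i₂ x, i₂ y⁆, hPPs _ (i₂P x) _ (i₂P y)⟩
    have hz : ∀ z, ⁅B, z⁆ = 0 ∧ ⁅A z x, y⁆ - ⁅A z y, x⁆ = 0 := fun z => by
      have h : ⁅(B : g), i₁ z⁆ = ⁅i₂ x, ⁅i₂ y, i₁ z⁆⁆ - ⁅i₂ y, ⁅i₂ x, i₁ z⁆⁆ := lie_lie _ _ _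
      rw [b01, b21, b21, ← lie_skew (i₂ x), ← lie_skew (i₂ y), b02, b02, neg_lie, neg_lie,
        map_neg, map_neg] at h
      refine hinj _ _ ?_
      rw [h, map_sub]; abel
    exact ⟨congrArg Subtype.val (hVfaith B fun z => (hz z).1), fun z => sub_eq_zero.mp (hz z).2⟩
  have h13 : ∀ x y z, ⁅A x y, z⁆ = ⁅A z y, x⁆ := fun x y z => (jac1 x z).2 y
  have h23 : ∀ x y z, ⁅A x y, z⁆ = ⁅A x z, y⁆ := fun x y z => (jac2 y z).2 x
  have hder : ∀ (T : s) x y, ⁅T, A x y⁆ = A ⁅T, x⁆ y + A x ⁅T, y⁆ := fun T x y => by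
    apply Subtype.ext
    have h : ⁅(T : g), ⁅i₁ x, i₂ y⁆⁆ = ⁅⁅(T : g), i₁ x⁆, i₂ y⁆ + ⁅i₁ x, ⁅(T : g), i₂ y⁆⁆ :=
      leibniz_lie _ _ _
    rw [b01, b02] at h
    exact h
  -- the 3-graded subalgebra `V₁ ⊕ s ⊕ V₂`
  let L : LieSubalgebra 𝕂 g :=
    { s.toSubmodule ⊔ P with
      lie_mem' := by
        intro a b ha hb
        obtain ⟨t, ht, p, hp, rfl⟩ := Submodule.mem_sup.mp ha
        obtain ⟨t', ht', p', hp', rfl⟩ := Submodule.mem_sup.mp hb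
        refine Submodule.mem_sup.mpr ⟨⁅t, t'⁆ + ⁅p, p'⁆, add_mem (s.lie_mem ht ht')
          (hPPs p hp p' hp'), ⁅t, p'⁆ - ⁅t', p⁆, sub_mem (hPstab ⟨t, ht⟩ p' hp')
          (hPstab ⟨t', ht'⟩ p hp), ?_⟩
        rw [add_lie, lie_add, lie_add, ← lie_skew p t']
        abel }
  have hsL : ∀ t ∈ s, t ∈ L := fun t ht =>
    (le_sup_left : s.toSubmodule ≤ s.toSubmodule ⊔ P) ht
  have hPL : ∀ p ∈ P, p ∈ L := fun p hp => (le_sup_right : P ≤ s.toSubmodule ⊔ P) hp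
  let k₁ : V →ₗ[𝕂] L := i₁.codRestrict L.toSubmodule fun x => hPL _ (i₁P x)
  let k₂ : V →ₗ[𝕂] L := i₂.codRestrict L.toSubmodule fun x => hPL _ (i₂P x)
  let j : s →ₗ⁅𝕂⁆ L :=
    { s.toSubmodule.subtype.codRestrict L.toSubmodule fun t => hsL t.1 t.2 with
      map_lie' := rfl }
  let Φ : (V × s × V) →ₗ[𝕂] L :=
    k₁.coprod ((j : s →ₗ[𝕂] L).coprod k₂)
  have hΦ : ∀ x T y, Φ (x, T, y) = k₁ x + j T + k₂ y := fun x T y => by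
    simp [Φ, add_assoc]
  have hΦinj : Function.Injective Φ := by
    rw [injective_iff_map_eq_zero]
    rintro ⟨x, T, y⟩ h
    rw [hΦ] at h
    have h' : i₁ x + (T : g) + i₂ y = 0 := congrArg Subtype.val h
    obtain ⟨-, hT, hp⟩ := hindep 0 (zero_mem _) T T.2 (i₁ x + i₂ y) (add_mem (i₁P x) (i₂P y))
      (Eq.trans (by abel) h')
    obtain ⟨hx, hy⟩ := hinj x y hp
    have hT' : T = 0 := Subtype.ext hT
    simp [hx, hy, hT']
  have hΦsurj : Function.Surjective Φ := by
    rintro ⟨l, hl⟩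
    obtain ⟨t, ht, p, hp, rfl⟩ := Submodule.mem_sup.mp hl
    refine ⟨((e ⟨p, hp⟩).1, ⟨t, ht⟩, (e ⟨p, hp⟩).2), ?_⟩
    rw [hΦ]
    apply Subtype.ext
    change i₁ (e ⟨p, hp⟩).1 + t + i₂ (e ⟨p, hp⟩).2 = t + p
    conv_rhs => rw [hsplit p hp]
    abel
  let E : (V × s × V) ≃ₗ[𝕂] L := LinearEquiv.ofBijective Φ ⟨hΦinj, hΦsurj⟩
  have E1 : ∀ x, E.symm (k₁ x) = (x, 0, 0) := fun x => by
    rw [LinearEquiv.symm_apply_eq]; change _ = Φ _; rw [hΦ]; simp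
  have E0 : ∀ T, E.symm (j T) = (0, T, 0) := fun T => by
    rw [LinearEquiv.symm_apply_eq]; change _ = Φ _; rw [hΦ]; simp
  have E2 : ∀ x, E.symm (k₂ x) = (0, 0, x) := fun x => by
    rw [LinearEquiv.symm_apply_eq]; change _ = Φ _; rw [hΦ]; simp
  have hA : ∀ x y, A x y = 0 :=
    triple_eq_zero hVfaith hVsimple A h13 h23 hder k₁ k₂ j
      (LinearMap.fst 𝕂 V (s × V) ∘ₗ E.symm.toLinearMap)
      (LinearMap.snd 𝕂 s V ∘ₗ LinearMap.snd 𝕂 V (s × V) ∘ₗ E.symm.toLinearMap)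
      (LinearMap.fst 𝕂 s V ∘ₗ LinearMap.snd 𝕂 V (s × V) ∘ₗ E.symm.toLinearMap)
      (fun l => by
        refine (hΦ _ _ _).symm.trans ?_
        exact E.apply_symm_apply l)
      (by simp [E1]) (by simp [E0]) (by simp [E2]) (by simp [E1]) (by simp [E0]) (by simp [E2])
      (by simp [E1]) (by simp [E0]) (by simp [E2])
      (fun x y => Subtype.ext (jac1 x y).1) (fun x y => Subtype.ext (jac2 x y).1)
      (fun x y => rfl) (fun T x => Subtype.ext (b01 T x)) (fun T x => Subtype.ext (b02 T x))
  intro x hx y hy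
  rw [hsplit x hx, hsplit y hy, add_lie, lie_add, lie_add, (jac1 _ _).1, (jac2 _ _).1, b12, b21,
    hA, hA]
  simp
end

section
/- Let s be a finite-dimensional Lie algebra over a field 𝕂 (𝕂 = ℝ or ℂ) and let V be a faithful simple finite-dimensional s-module such that every s-equivariant alternating bilinear map V × V → V is zero. Then s contains no nonzero Lie ideal that is isomorphic to V as an s-module (where an ideal of s is regarded as an s-module via the adjoint action). -/
/-!
The bracket of an ideal `I ≅ V` transports to an `s`-equivariant alternating bilinear map on `V`,
namely `(v, w) ↦ ⁅e⁻¹ v, w⁆`. By hypothesis it vanishes, so every element of `I` acts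
trivially on `V`, and faithfulness gives `I = 0`.
-/

/- STATEMENT 7: If s is a finite-dimensional Lie algebra over 𝕂 (= ℝ or ℂ) and V a faithful
simple finite-dimensional s-module such that every s-equivariant alternating bilinear map
V × V → V is zero, then s contains no nonzero Lie ideal isomorphic to V as an s-module
(ideals carrying the adjoint action). -/

theorem stmt_7 {𝕂 : Type*} [RCLike 𝕂]
    {s : Type*} [LieRing s] [LieAlgebra 𝕂 s] [FiniteDimensional 𝕂 s]
    (V : Type*) [AddCommGroup V] [Module 𝕂 V] [FiniteDimensional 𝕂 V]
    [LieRingModule s V] [LieModule 𝕂 s V]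
    -- V is faithful
    (hVfaith : ∀ T : s, (∀ v : V, ⁅T, v⁆ = 0) → T = 0)
    -- V is simple
    (hVnontriv : Nontrivial V)
    (hVsimple : ∀ W : LieSubmodule 𝕂 s V, W = ⊥ ∨ W = ⊤)
    -- every s-equivariant alternating bilinear map V × V → V is zero
    (hVbil : ∀ b : V →ₗ[𝕂] V →ₗ[𝕂] V, (∀ x : V, b x x = 0) →
      (∀ (T : s) (x y : V), b ⁅T, x⁆ y + b x ⁅T, y⁆ = ⁅T, b x y⁆) → b = 0) :
    ∀ I : LieIdeal 𝕂 s,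
      (∃ e : ↥I →ₗ[𝕂] V, Function.Bijective e ∧
        ∀ (T : s) (x : ↥I), e ⁅T, x⁆ = ⁅T, e x⁆) →
      I = ⊥ := by
  rintro I ⟨e, he, heq⟩
  let E : I ≃ₗ[𝕂] V := LinearEquiv.ofBijective e he
  have hE (x : I) : E x = e x := rfl
  -- The bracket of `I` transported to `V`: by equivariance of `e`,
  -- `e ⁅e⁻¹ v, e⁻¹ w⁆ = ⁅e⁻¹ v, w⁆`, and the right-hand side is used as the definition.
  let b : V →ₗ[𝕂] V →ₗ[𝕂] V :=
    (LieModule.toEnd 𝕂 s V : s →ₗ[𝕂] Module.End 𝕂 V) ∘ₗ I.toSubmodule.subtype ∘ₗ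
      (E.symm : V →ₗ[𝕂] I)
  have hb (v w : V) : b v w = ⁅(E.symm v : s), w⁆ := rfl
  have hsymm (T : s) (v : V) : E.symm ⁅T, v⁆ = ⁅T, E.symm v⁆ := by
    rw [LinearEquiv.symm_apply_eq, hE, heq, ← hE, LinearEquiv.apply_symm_apply]
  have hb0 : b = 0 := by
    refine hVbil b (fun v => ?_) (fun T v w => ?_)
    · have hself : ⁅(E.symm v : s), E.symm v⁆ = 0 :=
        Subtype.ext (lie_self (E.symm v : s))
      have h := heq (E.symm v : s) (E.symm v)
      rw [hself, map_zero, ← hE, LinearEquiv.apply_symm_apply] at h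
      rw [hb, ← h]
    · rw [hb, hb, hb, hsymm, LieSubmodule.coe_bracket, ← leibniz_lie]
  rw [LieSubmodule.eq_bot_iff]
  intro x hx
  refine hVfaith x fun v => ?_
  have h := hb (E ⟨x, hx⟩) v
  rw [hb0, LinearEquiv.symm_apply_apply] at h
  exact h.symm
end
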